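/- Let ρ be a density matrix on a nonempty finite type ι with entropy E and spectral constants α and β as in the context, and assume α > 0. Then there exist constants ε₀ > 0, α' > 0 and n₀ ∈ ℕ such that: for every n ≥ n₀, every nonempty finite type κ, every density matrix Γ on κ, every positive integer d, every real t > 0, and every density matrix X on the index type (Fin n → ι) × κ satisfying (i) rank X ≤ d, (ii) ‖X‖ ≤ t/d where ‖X‖ is the largest singular value (operator norm) of X, and (iii) D(ρ^{⊗n} ⊗ Γ, X) ≤ 2ε₀, one has t ≥ 2^{α'·√n}. -/

import Mathlib

open scoped BigOperators Classical ComplexOrder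

/-- A density matrix: positive semidefinite with trace one. -/
def IsDensity {ι : Type*} [Fintype ι] [DecidableEq ι] (ρ : Matrix ι ι ℂ) : Prop :=
  ρ.PosSemidef ∧ ρ.trace = 1

/-- The trace distance `D(ρ,σ) = Tr|ρ−σ|`: the sum of the absolute values of the
eigenvalues of the Hermitian matrix `ρ − σ` (no factor 1/2). -/
noncomputable def traceDist {ι : Type*} [Fintype ι] [DecidableEq ι]
    (ρ σ : Matrix ι ι ℂ) : ℝ :=
  if h : (ρ - σ).IsHermitian then ∑ i, |h.eigenvalues i| else 0

/-- The minimal dimension `𝒮(ρ,δ)` of a `δ`-significant subspace: the minimum rank of an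
orthogonal projection `P` (`P = Pᴴ = P²`) with `Tr(Pρ) ≥ δ`. -/
noncomputable def sigDim {ι : Type*} [Fintype ι] [DecidableEq ι]
    (ρ : Matrix ι ι ℂ) (δ : ℝ) : ℕ :=
  sInf {m : ℕ | ∃ P : Matrix ι ι ℂ,
    P.IsHermitian ∧ P * P = P ∧ δ ≤ ((P * ρ).trace).re ∧ P.rank = m}

/-- The `n`-fold Kronecker power of `ρ`, indexed by `Fin n → ι`. -/
noncomputable def kronPow {ι : Type*} (ρ : Matrix ι ι ℂ) (n : ℕ) :
    Matrix (Fin n → ι) (Fin n → ι) ℂ :=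
  Matrix.of fun i j => ∏ k, ρ (i k) (j k)

/-- The rank-one matrix `|u⟩⟨u|`. -/
noncomputable def outer {ι : Type*} (u : ι → ℂ) : Matrix ι ι ℂ :=
  Matrix.of fun i j => u i * starRingEnd ℂ (u j)

/-- The partial trace over the second subsystem. -/
noncomputable def ptraceB {A B : Type*} [Fintype B]
    (M : Matrix (A × B) (A × B) ℂ) : Matrix A A ℂ :=
  Matrix.of fun a a' => ∑ b, M (a, b) (a', b)

/-- The operator norm (largest singular value) of a matrix: the supremum of `‖Xv‖` over unit
vectors `v`. -/
noncomputable def opNorm {ι : Type*} [Fintype ι] (X : Matrix ι ι ℂ) : ℝ :=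
  sSup {r : ℝ | ∃ v : ι → ℂ,
    (∑ i, ‖v i‖ ^ 2 = 1) ∧ r = Real.sqrt (∑ i, ‖X.mulVec v i‖ ^ 2)}

/-- The matrix with spectral decomposition given by the columns of `U` and the real numbers `q`. -/
noncomputable def specMatrix {N : Type*} [Fintype N] [DecidableEq N] (U : Matrix N N ℂ)
    (q : N → ℝ) : Matrix N N ℂ :=
  U * Matrix.diagonal (fun i => (q i : ℂ)) * star U

section Spectral

variable {N : Type*} [Fintype N] [DecidableEq N]

theorem eq_specMatrix {A : Matrix N N ℂ} (hA : A.IsHermitian) :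
    A = specMatrix (hA.eigenvectorUnitary : Matrix N N ℂ) hA.eigenvalues := by
  conv_lhs => rw [hA.spectral_theorem, Unitary.conjStarAlgAut_apply]
  rfl

theorem specMatrix_isHermitian (U : Matrix N N ℂ) (q : N → ℝ) :
    (specMatrix U q).IsHermitian := by
  rw [specMatrix, Matrix.star_eq_conjTranspose]
  refine Matrix.isHermitian_mul_mul_conjTranspose U ?_
  rw [Matrix.isHermitian_diagonal_iff]
  exact fun i => Complex.conj_ofReal _

theorem sum_norm_sq_row {U : Matrix N N ℂ} (hU : U ∈ Matrix.unitaryGroup N ℂ) (i : N) :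
    ∑ j, ‖U i j‖ ^ 2 = 1 := by
  have h := congrFun (congrFun (Matrix.mem_unitaryGroup_iff.1 hU) i) i
  simp only [Matrix.mul_apply, Matrix.star_apply, Matrix.one_apply_eq] at h
  have : ((∑ j, ‖U i j‖ ^ 2 : ℝ) : ℂ) = 1 := by
    rw [← h]; push_cast
    exact Finset.sum_congr rfl fun j _ => (Complex.mul_conj' _).symm
  exact_mod_cast this

theorem sum_norm_sq_col {U : Matrix N N ℂ} (hU : U ∈ Matrix.unitaryGroup N ℂ) (j : N) :
    ∑ i, ‖U i j‖ ^ 2 = 1 := by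
  have h := sum_norm_sq_row (Unitary.star_mem hU) j
  simpa [Matrix.star_apply] using h

theorem star_mul_mem_unitaryGroup {W U : Matrix N N ℂ} (hW : W ∈ Matrix.unitaryGroup N ℂ)
    (hU : U ∈ Matrix.unitaryGroup N ℂ) : star W * U ∈ Matrix.unitaryGroup N ℂ :=
  mul_mem (Unitary.star_mem hW) hU

theorem re_trace_specMatrix_mul (W U : Matrix N N ℂ) (q a : N → ℝ) :
    (specMatrix W q * specMatrix U a).trace.re
      = ∑ i, ∑ j, q i * a j * ‖(star W * U) i j‖ ^ 2 := by
  have e : (specMatrix W q * specMatrix U a).trace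
      = (Matrix.diagonal (fun i => (q i : ℂ)) * (star W * U) *
          Matrix.diagonal (fun i => (a i : ℂ)) * star (star W * U)).trace := by
    rw [specMatrix, specMatrix, star_mul, star_star]
    simp only [Matrix.mul_assoc]
    rw [Matrix.trace_mul_comm]
    simp only [Matrix.mul_assoc]
  have : (specMatrix W q * specMatrix U a).trace
      = ((∑ i, ∑ j, q i * a j * ‖(star W * U) i j‖ ^ 2 : ℝ) : ℂ) := by
    rw [e]
    set B := star W * U
    simp only [Matrix.trace, Matrix.diag_apply, Matrix.mul_apply (N := star B),
      Matrix.mul_diagonal, Matrix.diagonal_mul, Matrix.star_apply]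
    push_cast
    refine Finset.sum_congr rfl fun i _ => Finset.sum_congr rfl fun j _ => ?_
    rw [← Complex.mul_conj']
    simp only [RCLike.star_def]
    ring
  rw [this, Complex.ofReal_re]

/-- Testing a difference with an effect `0 ≤ Q ≤ 1` detects at most the trace distance. -/
theorem abs_re_trace_specMatrix_mul_sub_le {σ X : Matrix N N ℂ} (hσ : σ.IsHermitian)
    (hX : X.IsHermitian) {W : Matrix N N ℂ} (hW : W ∈ Matrix.unitaryGroup N ℂ) (q : N → ℝ)
    (q0 : ∀ i, 0 ≤ q i) (q1 : ∀ i, q i ≤ 1) :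
    |(specMatrix W q * σ).trace.re - (specMatrix W q * X).trace.re| ≤ traceDist σ X := by
  have h : (σ - X).IsHermitian := hσ.sub hX
  rw [traceDist, dif_pos h, ← Complex.sub_re, ← Matrix.trace_sub, ← Matrix.mul_sub,
    congrArg (fun A => (specMatrix W q * A).trace.re) (eq_specMatrix h),
    re_trace_specMatrix_mul, Finset.sum_comm]
  refine (Finset.abs_sum_le_sum_abs _ _).trans (Finset.sum_le_sum fun j _ => ?_)
  have hc := sum_norm_sq_col (star_mul_mem_unitaryGroup hW h.eigenvectorUnitary.2) j
  refine (Finset.abs_sum_le_sum_abs _ _).trans ?_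
  calc _ ≤ ∑ i, |h.eigenvalues j| *
        ‖(star W * (h.eigenvectorUnitary : Matrix N N ℂ)) i j‖ ^ 2 := by
        refine Finset.sum_le_sum fun i _ => ?_
        rw [abs_mul, abs_mul, abs_of_nonneg (q0 i), abs_of_nonneg (sq_nonneg ‖_‖)]
        exact mul_le_mul_of_nonneg_right
          (mul_le_of_le_one_left (abs_nonneg _) (q1 i)) (sq_nonneg _)
    _ = _ := by rw [← Finset.mul_sum, hc, mul_one]

theorem le_opNorm (X : Matrix N N ℂ) (v : N → ℂ) (hv : ∑ i, ‖v i‖ ^ 2 = 1) :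
    Real.sqrt (∑ i, ‖X.mulVec v i‖ ^ 2) ≤ opNorm X := by
  refine le_csSup ⟨‖Matrix.toEuclideanCLM (𝕜 := ℂ) X‖, ?_⟩ ⟨v, hv, rfl⟩
  rintro _ ⟨u, hu, rfl⟩
  have h := (Matrix.toEuclideanCLM (𝕜 := ℂ) X).le_opNorm (WithLp.toLp 2 u)
  rw [Matrix.toEuclideanCLM_toLp, EuclideanSpace.norm_eq, EuclideanSpace.norm_eq] at h
  simpa [hu] using h

theorem eigenvalues_le_opNorm {X : Matrix N N ℂ} (hX : X.IsHermitian) (j : N) :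
    hX.eigenvalues j ≤ opNorm X := by
  have hn : ∑ i, ‖hX.eigenvectorBasis j i‖ ^ 2 = 1 := by
    rw [← EuclideanSpace.norm_sq_eq, hX.eigenvectorBasis.orthonormal.1 j, one_pow]
  refine le_trans ?_ (le_opNorm X (hX.eigenvectorBasis j) hn)
  rw [hX.mulVec_eigenvectorBasis]
  refine Real.le_sqrt_of_sq_le (le_of_eq ?_)
  simp [mul_pow, ← Finset.mul_sum, hn]

variable {V : Matrix N N ℂ} {w : N → ℝ} {X : Matrix N N ℂ} {τ : ℝ}

/-- A state close to one of rank at most `d` has little mass on eigenvalues well below `1 / d`. -/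
theorem sum_eigenvalues_lt_le (hV : V ∈ Matrix.unitaryGroup N ℂ) (w0 : ∀ i, 0 ≤ w i)
    (w1 : ∑ i, w i = 1) (hX : IsDensity X) {d : ℕ} (hr : X.rank ≤ d)
    (hD : traceDist (specMatrix V w) X ≤ τ) {c : ℝ} (hc : 0 ≤ c) :
    ∑ i with w i < c, w i ≤ τ + d * c := by
  set hH := hX.1.isHermitian
  set U : Matrix N N ℂ := (hH.eigenvectorUnitary : Matrix N N ℂ)
  have hU : U ∈ Matrix.unitaryGroup N ℂ := hH.eigenvectorUnitary.2
  set a := hH.eigenvalues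
  set q : N → ℝ := fun i => if a i ≠ 0 then 1 else 0
  have q0 : ∀ i, 0 ≤ q i := fun i => by simp only [q]; split_ifs <;> norm_num
  have q1 : ∀ i, q i ≤ 1 := fun i => by simp only [q]; split_ifs <;> norm_num
  have htr : (specMatrix U q * X).trace.re = 1 := by
    have hXU : X = specMatrix U a := eq_specMatrix hH
    have : specMatrix U q * X = X := by
      conv_lhs => rw [hXU]
      conv_rhs => rw [hXU]
      have hd : Matrix.diagonal (fun i => (q i : ℂ)) * Matrix.diagonal (fun i => (a i : ℂ))
          = Matrix.diagonal (fun i => (a i : ℂ)) := by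
        rw [Matrix.diagonal_mul_diagonal]
        congr 1; funext i
        by_cases h : a i = 0 <;> simp [q, h]
      rw [specMatrix, specMatrix]
      nth_rw 2 [← hd]
      simp only [Matrix.mul_assoc]
      rw [← Matrix.mul_assoc (star U) U, Matrix.mem_unitaryGroup_iff'.1 hU, Matrix.one_mul]
    rw [this, hX.2, Complex.one_re]
  have hq : ∑ i, q i ≤ d := by
    rw [hH.rank_eq_card_non_zero_eigs, Fintype.card_subtype] at hr
    simp only [q, Finset.sum_boole]
    exact_mod_cast hr
  have hdist := (abs_le.1 ((abs_re_trace_specMatrix_mul_sub_le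
    (specMatrix_isHermitian V w) hH hU q q0 q1).trans hD)).1
  rw [htr, re_trace_specMatrix_mul] at hdist
  set B := star U * V
  have hBu : B ∈ Matrix.unitaryGroup N ℂ := star_mul_mem_unitaryGroup hU hV
  have key : ∑ i, ∑ j, q i * w j * ‖B i j‖ ^ 2 ≤ d * c + ∑ j with ¬ w j < c, w j := by
    calc ∑ i, ∑ j, q i * w j * ‖B i j‖ ^ 2
        ≤ ∑ i, ∑ j, (q i * c * ‖B i j‖ ^ 2
            + (if ¬ w j < c then w j else 0) * ‖B i j‖ ^ 2) := by
          refine Finset.sum_le_sum fun i _ => Finset.sum_le_sum fun j _ => ?_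
          rw [← add_mul]
          refine mul_le_mul_of_nonneg_right ?_ (sq_nonneg _)
          split_ifs with h
          · rw [add_zero]
            exact mul_le_mul_of_nonneg_left h.le (q0 i)
          · have := mul_le_of_le_one_left (w0 j) (q1 i)
            have := mul_nonneg (q0 i) hc
            linarith
      _ = (∑ i, q i) * c + ∑ j with ¬ w j < c, w j := by
          simp only [Finset.sum_add_distrib]
          congr 1
          · simp only [← Finset.mul_sum, sum_norm_sq_row hBu, mul_one, ← Finset.sum_mul]
          · rw [Finset.sum_comm, Finset.sum_filter]
            simp only [← Finset.mul_sum, sum_norm_sq_col hBu, mul_one]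
      _ ≤ _ := by gcongr
  have split := Finset.sum_filter_add_sum_filter_not Finset.univ (fun i => w i < c) w
  rw [w1] at split
  linarith

/-- A state close to one of operator norm at most `s` has little mass on eigenvalues well
above `s`. -/
theorem sum_eigenvalues_gt_le (hV : V ∈ Matrix.unitaryGroup N ℂ) (w0 : ∀ i, 0 ≤ w i)
    (w1 : ∑ i, w i = 1) (hX : IsDensity X) {s : ℝ} (hs : 0 ≤ s) (hn : opNorm X ≤ s)
    (hD : traceDist (specMatrix V w) X ≤ τ) {c : ℝ} (hc : 0 < c) :
    ∑ i with c < w i, w i ≤ τ + s / c := by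
  set hH := hX.1.isHermitian
  set q : N → ℝ := fun i => if c < w i then 1 else 0
  have q0 : ∀ i, 0 ≤ q i := fun i => by simp only [q]; split_ifs <;> norm_num
  have q1 : ∀ i, q i ≤ 1 := fun i => by simp only [q]; split_ifs <;> norm_num
  have hdist := (abs_le.1 ((abs_re_trace_specMatrix_mul_sub_le
    (specMatrix_isHermitian V w) hH hV q q0 q1).trans hD)).2
  have hσ : (specMatrix V q * specMatrix V w).trace.re = ∑ i with c < w i, w i := by
    rw [re_trace_specMatrix_mul, Matrix.mem_unitaryGroup_iff'.1 hV, Finset.sum_filter]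
    refine Finset.sum_congr rfl fun i _ => ?_
    rw [Finset.sum_eq_single i (fun j _ h => by simp [Matrix.one_apply_ne h.symm]) (by simp)]
    simp [q]
  have hq : (∑ i, q i) * c ≤ 1 := by
    rw [← w1, Finset.sum_mul]
    refine Finset.sum_le_sum fun i _ => ?_
    simp only [q]
    split_ifs with h
    · rw [one_mul]; exact h.le
    · rw [zero_mul]; exact w0 i
  have hqX : (specMatrix V q * X).trace.re ≤ s / c := by
    rw [congrArg (fun A => (specMatrix V q * A).trace.re) (eq_specMatrix hH),
      re_trace_specMatrix_mul]
    calc _ ≤ ∑ i, ∑ j, q i * s *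
          ‖(star V * (hH.eigenvectorUnitary : Matrix N N ℂ)) i j‖ ^ 2 := by
          refine Finset.sum_le_sum fun i _ => Finset.sum_le_sum fun j _ => ?_
          exact mul_le_mul_of_nonneg_right (mul_le_mul_of_nonneg_left
            ((eigenvalues_le_opNorm hH j).trans hn) (q0 i)) (sq_nonneg _)
      _ = (∑ i, q i) * s := by
          simp only [← Finset.mul_sum, ← Finset.sum_mul, mul_one,
            sum_norm_sq_row (star_mul_mem_unitaryGroup hV hH.eigenvectorUnitary.2)]
      _ ≤ s / c := by
          rw [le_div_iff₀ hc]
          nlinarith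
  rw [hσ] at hdist
  linarith

end Spectral

section KroneckerPower

theorem kronPow_mul {ι : Type*} [Fintype ι] (A B : Matrix ι ι ℂ) (n : ℕ) :
    kronPow (A * B) n = kronPow A n * kronPow B n := by
  ext i j
  simp only [kronPow, Matrix.of_apply, Matrix.mul_apply, Finset.prod_univ_sum,
    Fintype.piFinset_univ, Finset.prod_mul_distrib]

theorem kronPow_star {ι : Type*} (A : Matrix ι ι ℂ) (n : ℕ) : kronPow (star A) n = star (kronPow A n) := by
  ext i j
  simp [kronPow, Matrix.star_apply]

theorem kronPow_diagonal {ι : Type*} [DecidableEq ι] (a : ι → ℂ) (n : ℕ) :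
    kronPow (Matrix.diagonal a) n = Matrix.diagonal fun x => ∏ k, a (x k) := by
  ext i j
  simp only [kronPow, Matrix.of_apply, Matrix.diagonal_apply]
  split_ifs with h
  · subst h; simp
  · obtain ⟨k, hk⟩ := Function.ne_iff.1 h
    exact Finset.prod_eq_zero (Finset.mem_univ k) (by simp [hk])

variable {ι : Type*} [Fintype ι] [DecidableEq ι]

theorem kronPow_mem_unitaryGroup {U : Matrix ι ι ℂ} (hU : U ∈ Matrix.unitaryGroup ι ℂ) (n : ℕ) :
    kronPow U n ∈ Matrix.unitaryGroup (Fin n → ι) ℂ := by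
  rw [Matrix.mem_unitaryGroup_iff, ← kronPow_star, ← kronPow_mul, Matrix.mem_unitaryGroup_iff.1 hU,
    ← Matrix.diagonal_one, kronPow_diagonal]
  simp

theorem kronPow_specMatrix (U : Matrix ι ι ℂ) (p : ι → ℝ) (n : ℕ) :
    kronPow (specMatrix U p) n = specMatrix (kronPow U n) fun x => ∏ k, p (x k) := by
  rw [specMatrix, specMatrix, kronPow_mul, kronPow_mul, kronPow_star, kronPow_diagonal]
  simp

theorem kronecker_specMatrix {κ : Type*} [Fintype κ] [DecidableEq κ] (U : Matrix ι ι ℂ)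
    (V : Matrix κ κ ℂ) (p : ι → ℝ) (g : κ → ℝ) :
    Matrix.kroneckerMap (· * ·) (specMatrix U p) (specMatrix V g)
      = specMatrix (Matrix.kroneckerMap (· * ·) U V) fun x => p x.1 * g x.2 := by
  simp only [specMatrix, Matrix.star_eq_conjTranspose]
  rw [Matrix.mul_kronecker_mul, Matrix.mul_kronecker_mul, Matrix.diagonal_kronecker_diagonal,
    ← Matrix.conjTranspose_kronecker]
  simp

end KroneckerPower

theorem IsDensity.sum_eigenvalues {ι : Type*} [Fintype ι] [DecidableEq ι] {ρ : Matrix ι ι ℂ}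
    (hρ : IsDensity ρ) : ∑ i, hρ.1.isHermitian.eigenvalues i = 1 := by
  have h := hρ.1.isHermitian.trace_eq_sum_eigenvalues
  simpa using (congrArg Complex.re (h.symm.trans hρ.2))


/-- A finitely supported random variable with variance `V` and bounded fourth moment puts a fixed
amount of mass outside every set on which its oscillation is at most its standard deviation. -/
theorem anticoncentration_of_fourth_moment {Ω : Type*} [Fintype Ω] [DecidableEq Ω] (W Y : Ω → ℝ)
    (hW : ∀ x, 0 ≤ W x) {V M ℓ : ℝ} (h0 : ∑ x, W x = 1) (h1 : ∑ x, W x * Y x = 0)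
    (h2 : ∑ x, W x * Y x ^ 2 = V) (h4 : ∑ x, W x * Y x ^ 4 ≤ M) (hV : 0 < V) (hM : 0 ≤ M)
    (A : Finset Ω) (hA : ∀ x ∈ A, ∀ y ∈ A, |Y x - Y y| ≤ ℓ) (hℓ : ℓ ^ 2 ≤ V) :
    V ^ 2 / (2 * (2 * M + 6 * V ^ 2)) ≤ ∑ x ∈ Aᶜ, W x := by
  set η := ∑ x ∈ Aᶜ, W x with hη
  have hη' : η = ∑ x, W x * (if x ∈ A then 0 else 1) := by
    rw [hη, Finset.compl_eq_univ_sdiff, ← Finset.filter_notMem_eq_sdiff, Finset.sum_filter]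
    exact Finset.sum_congr rfl fun x _ => by split_ifs <;> simp_all
  set C := 2 * M + 6 * V ^ 2 with hC
  have hCpos : 0 < C := by positivity
  set K := C / (2 * V) with hK
  have hKpos : 0 < K := by positivity
  have hpt : ∀ x y, (Y x - Y y) ^ 2 ≤ V + (Y x - Y y) ^ 4 / (4 * K)
      + K * ((if x ∈ A then 0 else 1) + (if y ∈ A then 0 else 1)) := by
    intro x y
    have hq : 0 ≤ (Y x - Y y) ^ 4 / (4 * K) := by positivity
    by_cases hxy : x ∈ A ∧ y ∈ A
    · have : (Y x - Y y) ^ 2 ≤ ℓ ^ 2 := by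
        rw [← sq_abs]; exact pow_le_pow_left₀ (abs_nonneg _) (hA x hxy.1 y hxy.2) 2
      simp only [hxy.1, hxy.2, if_true]
      linarith
    · have hone : (1 : ℝ) ≤ (if x ∈ A then 0 else 1) + (if y ∈ A then 0 else 1) := by
        split_ifs <;> simp_all
      have hK1 := mul_le_mul_of_nonneg_left hone hKpos.le
      have amgm : (Y x - Y y) ^ 2 ≤ (Y x - Y y) ^ 4 / (4 * K) + K := by
        have e : (Y x - Y y) ^ 4 / (4 * K) + K - (Y x - Y y) ^ 2
            = ((Y x - Y y) ^ 2 - 2 * K) ^ 2 / (4 * K) := by field_simp; ring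
        have : 0 ≤ ((Y x - Y y) ^ 2 - 2 * K) ^ 2 / (4 * K) := by positivity
        linarith
      linarith
  have hsum : ∑ x, ∑ y, W x * W y * (Y x - Y y) ^ 2 ≤ ∑ x, ∑ y, W x * W y *
      (V + (Y x - Y y) ^ 4 / (4 * K)
        + K * ((if x ∈ A then 0 else 1) + (if y ∈ A then 0 else 1))) :=
    Finset.sum_le_sum fun x _ => Finset.sum_le_sum fun y _ =>
      mul_le_mul_of_nonneg_left (hpt x y) (mul_nonneg (hW x) (hW y))
  set S3 := ∑ x, W x * Y x ^ 3
  set S4 := ∑ x, W x * Y x ^ 4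
  have el : ∑ x, ∑ y, W x * W y * (Y x - Y y) ^ 2 = 2 * V := by
    have inner : ∀ x, ∑ y, W x * W y * (Y x - Y y) ^ 2
        = W x * Y x ^ 2 * (∑ y, W y) - 2 * (W x * Y x) * (∑ y, W y * Y y)
          + W x * ∑ y, W y * Y y ^ 2 := fun x => by
      simp only [Finset.mul_sum, ← Finset.sum_add_distrib, ← Finset.sum_sub_distrib]
      exact Finset.sum_congr rfl fun y _ => by ring
    simp only [inner, h0, h1, h2, mul_one, mul_zero, sub_zero, Finset.sum_add_distrib,
      ← Finset.sum_mul]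
    ring
  have er : ∑ x, ∑ y, W x * W y * (V + (Y x - Y y) ^ 4 / (4 * K)
        + K * ((if x ∈ A then 0 else 1) + (if y ∈ A then 0 else 1)))
      = V + (2 * S4 + 6 * V ^ 2) / (4 * K) + 2 * K * η := by
    have inner : ∀ x, ∑ y, W x * W y * (V + (Y x - Y y) ^ 4 / (4 * K)
        + K * ((if x ∈ A then 0 else 1) + (if y ∈ A then 0 else 1)))
        = (W x * V + W x * Y x ^ 4 / (4 * K) + K * (W x * (if x ∈ A then 0 else 1)))
            * (∑ y, W y)
          - W x * Y x ^ 3 / K * (∑ y, W y * Y y)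
          + (6 / (4 * K)) * (W x * Y x ^ 2) * (∑ y, W y * Y y ^ 2)
          - W x * Y x / K * S3 + W x / (4 * K) * S4
          + K * W x * ∑ y, W y * (if y ∈ A then 0 else 1) := fun x => by
      simp only [S3, S4, Finset.mul_sum, ← Finset.sum_add_distrib, ← Finset.sum_sub_distrib]
      refine Finset.sum_congr rfl fun y _ => ?_
      field_simp
      ring
    simp only [inner, h0, h1, h2, ← hη', mul_one, mul_zero, sub_zero, Finset.sum_add_distrib,
      Finset.sum_sub_distrib, ← Finset.sum_mul, ← Finset.mul_sum, ← Finset.sum_div]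
    change _ + S4 / (4 * K) + _ + _ - _ + _ + _ = _
    field_simp
    ring
  rw [el, er] at hsum
  have hS : (2 * S4 + 6 * V ^ 2) / (4 * K) ≤ V / 2 := by
    rw [hK, div_le_iff₀ (by positivity)]
    have : V / 2 * (4 * (C / (2 * V))) = C := by field_simp; ring
    rw [this, hC]; linarith
  rw [div_le_iff₀ (by positivity)]
  have : 2 * K * η * V = C * η := by rw [hK]; field_simp
  nlinarith

/-- Splitting a sum over `(n + 1)`-tuples according to the first entry. -/
theorem sum_fin_succ_arrow {ι : Type*} [Fintype ι] {n : ℕ} (g : (Fin (n + 1) → ι) → ℝ) :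
    ∑ x, g x = ∑ i, ∑ x : Fin n → ι, g (Fin.cons i x) := by
  rw [← (Fin.consEquiv fun _ : Fin (n + 1) => ι).sum_comp, Fintype.sum_prod_type]
  rfl

/-- The first, second and fourth moments of a sum of `n` i.i.d. centred random variables. -/
theorem iid_sum_moments {ι : Type*} [Fintype ι] (w f : ι → ℝ) {v m : ℝ} (hw : ∀ i, 0 ≤ w i)
    (h0 : ∑ i, w i = 1) (h1 : ∑ i, w i * f i = 0) (h2 : ∑ i, w i * f i ^ 2 = v)
    (h4 : ∑ i, w i * f i ^ 4 = m) (n : ℕ) :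
    (∑ x : Fin n → ι, ∏ k, w (x k) = 1) ∧
    (∑ x : Fin n → ι, (∏ k, w (x k)) * ∑ k, f (x k) = 0) ∧
    (∑ x : Fin n → ι, (∏ k, w (x k)) * (∑ k, f (x k)) ^ 2 = n * v) ∧
    (∑ x : Fin n → ι, (∏ k, w (x k)) * (∑ k, f (x k)) ^ 4 ≤ (3 * v ^ 2 + m) * n ^ 2) := by
  induction n with
  | zero => simp
  | succ n ih =>
    obtain ⟨i0, i1, i2, i4⟩ := ih
    simp only [sum_fin_succ_arrow, Fin.prod_univ_succ, Fin.sum_univ_succ, Fin.cons_zero,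
      Fin.cons_succ]
    set W : (Fin n → ι) → ℝ := fun x => ∏ k, w (x k)
    set Y : (Fin n → ι) → ℝ := fun x => ∑ k, f (x k)
    change (∑ i, ∑ x, w i * W x = 1) ∧ (∑ i, ∑ x, w i * W x * (f i + Y x) = 0) ∧
      (∑ i, ∑ x, w i * W x * (f i + Y x) ^ 2 = _) ∧
      (∑ i, ∑ x, w i * W x * (f i + Y x) ^ 4 ≤ _)
    change ∑ x, W x = 1 at i0
    change ∑ x, W x * Y x = 0 at i1
    change ∑ x, W x * Y x ^ 2 = _ at i2
    change ∑ x, W x * Y x ^ 4 ≤ _ at i4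
    refine ⟨?_, ?_, ?_, ?_⟩
    · simp [← Finset.mul_sum, i0, h0]
    · have e : ∀ i, ∑ x, w i * W x * (f i + Y x)
          = w i * f i * ∑ x, W x + w i * ∑ x, W x * Y x := fun i => by
        simp only [Finset.mul_sum, ← Finset.sum_add_distrib]
        exact Finset.sum_congr rfl fun y _ => by ring
      simp [e, i0, i1, h1]
    · have e : ∀ i, ∑ x, w i * W x * (f i + Y x) ^ 2
          = w i * f i ^ 2 * ∑ x, W x + 2 * (w i * f i) * ∑ x, W x * Y x
            + w i * ∑ x, W x * Y x ^ 2 := fun i => by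
        simp only [Finset.mul_sum, ← Finset.sum_add_distrib]
        exact Finset.sum_congr rfl fun y _ => by ring
      simp only [e, i0, i1, i2, mul_one, mul_zero, add_zero, Finset.sum_add_distrib, h2,
        ← Finset.sum_mul, h0]
      push_cast; ring
    · have e : ∀ i, ∑ x, w i * W x * (f i + Y x) ^ 4
          = w i * f i ^ 4 * ∑ x, W x + 4 * (w i * f i ^ 3) * ∑ x, W x * Y x
            + 6 * (w i * f i ^ 2) * ∑ x, W x * Y x ^ 2
            + 4 * (w i * f i) * ∑ x, W x * Y x ^ 3
            + w i * ∑ x, W x * Y x ^ 4 := fun i => by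
        simp only [Finset.mul_sum, ← Finset.sum_add_distrib]
        exact Finset.sum_congr rfl fun y _ => by ring
      simp only [e, i0, i1, i2, mul_one, mul_zero, add_zero, Finset.sum_add_distrib, h2, h4, h1,
        ← Finset.sum_mul, ← Finset.mul_sum, h0, zero_mul, one_mul]
      have hm : 0 ≤ m := h4 ▸ Finset.sum_nonneg fun i _ => mul_nonneg (hw i) (by positivity)
      have : 0 ≤ (n : ℝ) * m := by positivity
      have := sq_nonneg v
      push_cast
      nlinarith

/-- core of the communication lower bound: there are `ε₀ > 0`, `α' > 0`, `n₀`
such that for `n ≥ n₀`, any density matrix `X` of rank `≤ d` and operator norm `≤ t/d` that is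
within trace distance `2ε₀` of `ρ^{⊗n} ⊗ Γ` forces `t ≥ 2^{α'√n}`. -/
theorem communication_lower_bound_core {ι : Type*} [Fintype ι] [DecidableEq ι] [Nonempty ι]
    (ρ : Matrix ι ι ℂ) (hρ : IsDensity ρ)
    (E α β : ℝ)
    (hE : E = -∑ i, hρ.1.isHermitian.eigenvalues i *
        Real.logb 2 (hρ.1.isHermitian.eigenvalues i))
    (hα : α = Real.sqrt (∑ i, hρ.1.isHermitian.eigenvalues i *
        (Real.logb 2 (hρ.1.isHermitian.eigenvalues i) + E) ^ 2))
    (hβ : β = ∑ i, hρ.1.isHermitian.eigenvalues i *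
        |Real.logb 2 (hρ.1.isHermitian.eigenvalues i) + E| ^ 3)
    (hαpos : 0 < α) :
    ∃ ε₀ α' : ℝ, ∃ n₀ : ℕ, 0 < ε₀ ∧ 0 < α' ∧
      ∀ n : ℕ, n₀ ≤ n →
      ∀ (κ : Type) [Fintype κ] [DecidableEq κ] [Nonempty κ],
      ∀ Γ : Matrix κ κ ℂ, IsDensity Γ →
      ∀ d : ℕ, 0 < d →
      ∀ t : ℝ, 0 < t →
      ∀ X : Matrix ((Fin n → ι) × κ) ((Fin n → ι) × κ) ℂ, IsDensity X →
        X.rank ≤ d →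
        opNorm X ≤ t / d →
        traceDist (Matrix.kroneckerMap (· * ·) (kronPow ρ n) Γ) X ≤ 2 * ε₀ →
        (2 : ℝ) ^ (α' * Real.sqrt n) ≤ t := by
  have hp0 : ∀ i, 0 ≤ hρ.1.isHermitian.eigenvalues i := hρ.1.eigenvalues_nonneg
  have hp1 := hρ.sum_eigenvalues
  have hρU := eq_specMatrix hρ.1.isHermitian
  have hU := hρ.1.isHermitian.eigenvectorUnitary.2
  set U : Matrix ι ι ℂ := (hρ.1.isHermitian.eigenvectorUnitary : Matrix ι ι ℂ)
  set p := hρ.1.isHermitian.eigenvalues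
  set f : ι → ℝ := fun i => Real.logb 2 (p i) + E
  have h1 : ∑ i, p i * f i = 0 := by
    simp only [f, mul_add, Finset.sum_add_distrib, ← Finset.sum_mul, hp1, hE]
    ring
  have h2 : ∑ i, p i * f i ^ 2 = α ^ 2 := by
    rw [hα, Real.sq_sqrt (Finset.sum_nonneg fun i _ => mul_nonneg (hp0 i) (sq_nonneg _))]
  set m := ∑ i, p i * f i ^ 4 with hm
  have hm0 : 0 ≤ m := Finset.sum_nonneg fun i _ => mul_nonneg (hp0 i) (by positivity)
  set C := 3 * (α ^ 2) ^ 2 + m with hC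
  have hC0 : 0 ≤ C := by positivity
  set η := (α ^ 2) ^ 2 / (2 * (2 * C + 6 * (α ^ 2) ^ 2)) with hη
  have hηpos : 0 < η := by positivity
  set ε := η / 12 with hε
  have hεpos : 0 < ε := by positivity
  refine ⟨ε, α / 2, max 1 ⌈(4 * Real.logb 2 ε / α) ^ 2⌉₊, hεpos, by positivity, ?_⟩
  intro n hn κ _ _ _ Γ hΓ d hd t ht X hX hrank hnorm hdist
  have hn1 : 1 ≤ n := (le_max_left _ _).trans hn
  have hnpos : (0 : ℝ) < n := by exact_mod_cast hn1
  have hdpos : (0 : ℝ) < d := by exact_mod_cast hd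
  have hnlog : -(4 * Real.logb 2 ε) ≤ α * Real.sqrt n := by
    have h : (4 * Real.logb 2 ε / α) ^ 2 ≤ n :=
      (Nat.le_ceil _).trans (by exact_mod_cast (le_max_right _ _).trans hn)
    have h' := (abs_le.1 (Real.abs_le_sqrt h)).1
    rw [le_div_iff₀ hαpos] at h'
    linarith
  by_contra! hlt
  have hlogt : Real.logb 2 t ≤ α / 2 * Real.sqrt n := by
    rw [Real.logb_le_iff_le_rpow (by norm_num) ht]
    exact hlt.le
  have hg0 : ∀ z, 0 ≤ hΓ.1.isHermitian.eigenvalues z := hΓ.1.eigenvalues_nonneg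
  have hg1 := hΓ.sum_eigenvalues
  have hΓU := eq_specMatrix hΓ.1.isHermitian
  have hUΓ := hΓ.1.isHermitian.eigenvectorUnitary.2
  set UΓ : Matrix κ κ ℂ := (hΓ.1.isHermitian.eigenvectorUnitary : Matrix κ κ ℂ)
  set g := hΓ.1.isHermitian.eigenvalues
  obtain ⟨P1, PY1, PY2, PY4⟩ := iid_sum_moments p f hp0 hp1 h1 h2 hm.symm n
  set P : (Fin n → ι) → ℝ := fun x => ∏ k, p (x k)
  set Y : (Fin n → ι) → ℝ := fun x => ∑ k, f (x k)
  have hP0 : ∀ x, 0 ≤ P x := fun x => Finset.prod_nonneg fun k _ => hp0 _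
  have hYlog : ∀ x, 0 < P x → Y x = Real.logb 2 (P x) + n * E := by
    intro x hx
    simp only [Y, f, P, Finset.sum_add_distrib]
    rw [Real.logb_prod _ _ fun k hk hk0 => hx.ne' (Finset.prod_eq_zero hk hk0)]
    simp
  set w : (Fin n → ι) × κ → ℝ := fun x => P x.1 * g x.2 with hw
  have w0 : ∀ x, 0 ≤ w x := fun x => mul_nonneg (hP0 _) (hg0 _)
  have w1 : ∑ x, w x = 1 := by
    rw [Fintype.sum_prod_type]
    simp only [hw, ← Finset.mul_sum, hg1, mul_one]
    exact P1
  set V := Matrix.kroneckerMap (· * ·) (kronPow U n) UΓ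
  have hV : V ∈ Matrix.unitaryGroup ((Fin n → ι) × κ) ℂ :=
    Matrix.kronecker_mem_unitary (kronPow_mem_unitaryGroup hU n) hUΓ
  have hσ : Matrix.kroneckerMap (· * ·) (kronPow ρ n) Γ = specMatrix V w := by
    rw [hρU, hΓU, kronPow_specMatrix, kronecker_specMatrix]
  rw [hσ] at hdist
  have hlow := sum_eigenvalues_lt_le hV w0 w1 hX hrank hdist (c := ε / d) (by positivity)
  have hhigh := sum_eigenvalues_gt_le hV w0 w1 hX (by positivity) hnorm hdist
    (c := t / d / ε) (by positivity)
  rw [mul_div_cancel₀ _ hdpos.ne'] at hlow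
  rw [div_div_cancel₀ (by positivity)] at hhigh
  set A : κ → Finset (Fin n → ι) := fun z =>
    Finset.univ.filter fun x => ε / d ≤ w (x, z) ∧ w (x, z) ≤ t / d / ε with hA
  have hone : ∀ z, 0 < g z → ∀ x ∈ A z, ∀ y ∈ A z, Y x - Y y ≤ α * Real.sqrt n := by
    intro z hz x hx y hy
    have hxw := (Finset.mem_filter.1 hx).2
    have hyw := (Finset.mem_filter.1 hy).2
    have hεd : 0 < ε / d := by positivity
    have hPx : 0 < P x := pos_of_mul_pos_left (hεd.trans_le hxw.1) hz.le
    have hPy : 0 < P y := pos_of_mul_pos_left (hεd.trans_le hyw.1) hz.le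
    have hu := Real.logb_le_logb_of_le (b := 2) (by norm_num) (hεd.trans_le hxw.1) hxw.2
    have hl := Real.logb_le_logb_of_le (b := 2) (by norm_num) hεd hyw.1
    simp only [hw] at hu hl
    rw [Real.logb_mul hPx.ne' hz.ne', Real.logb_div (by positivity) hεpos.ne',
      Real.logb_div ht.ne' hdpos.ne'] at hu
    rw [Real.logb_mul hPy.ne' hz.ne', Real.logb_div hεpos.ne' hdpos.ne'] at hl
    rw [hYlog x hPx, hYlog y hPy]
    linarith
  have hanti : ∀ z, 0 < g z → η ≤ ∑ x ∈ (A z)ᶜ, P x := by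
    intro z hz
    have h := anticoncentration_of_fourth_moment P Y hP0 P1 PY1 PY2 PY4 (by positivity)
      (by positivity) (A z) (ℓ := α * Real.sqrt n)
      (fun x hx y hy => abs_le.2
        ⟨by linarith [hone z hz y hy x hx], hone z hz x hx y hy⟩)
      (by rw [mul_pow, Real.sq_sqrt hnpos.le, mul_comm])
    refine le_trans (le_of_eq ?_) h
    rw [hη, hC]
    field_simp
  have hmix : η ≤ ∑ z, g z * ∑ x ∈ (A z)ᶜ, P x := by
    calc η = ∑ z, g z * η := by rw [← Finset.sum_mul, hg1, one_mul]
      _ ≤ _ := Finset.sum_le_sum fun z _ => by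
        rcases (hg0 z).eq_or_lt with h | h
        · simp [← h]
        · exact mul_le_mul_of_nonneg_left (hanti z h) h.le
  have hout : ∑ z, g z * ∑ x ∈ (A z)ᶜ, P x
      ≤ (∑ x with w x < ε / d, w x) + ∑ x with t / d / ε < w x, w x := by
    rw [Finset.sum_filter, Finset.sum_filter, ← Finset.sum_add_distrib,
      Fintype.sum_prod_type_right]
    refine Finset.sum_le_sum fun z _ => ?_
    rw [Finset.mul_sum, hA, Finset.compl_filter, Finset.sum_filter]
    refine Finset.sum_le_sum fun x _ => ?_
    have hx := w0 (x, z)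
    have hgP : g z * P x = w (x, z) := mul_comm _ _
    rw [hgP]
    by_cases a : ε / d ≤ w (x, z) ∧ w (x, z) ≤ t / d / ε
    · rw [if_neg (not_not.2 a)]
      split_ifs <;> linarith
    · rw [if_pos a]
      rcases not_and_or.1 a with h | h
      · rw [if_pos (not_le.1 h)]
        split_ifs <;> linarith
      · rw [if_pos (not_le.1 h)]
        split_ifs <;> linarith
  linarith
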